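/- arXiv:quant-ph/0302002 — 2 statements merged into one kernel-verified Lean document; each statement's English description precedes it below -/
import Mathlib

section
/- For every ε > 0 there exists N such that for all n ≥ N there exists an invertible n×n matrix A over 𝔽₂ with the property that every list of transvections whose product equals A has length at least (1/2 − ε) · n² / log₂ n. -/
/-- `A` is a transvection matrix over `𝔽₂`: the identity with a single
off-diagonal entry set to `1`. -/
def IsTransvection {n : ℕ} (A : Matrix (Fin n) (Fin n) (ZMod 2)) : Prop :=
  ∃ i j : Fin n, i ≠ j ∧ A = Matrix.transvection i j 1

/-!
The argument is a count. If `S` is a finite subset of a monoid, at most `(#S + 1) ^ m` elements are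
products of at most `m` factors from `S`: pad shorter products with the factor `1`. There are
at most `n ^ 2 - n` transvections, while `GL n 𝔽₂` has at least `2 ^ (n * (n - 1))` elements, so
some invertible matrix needs a number `m` of transvections with `2 ^ (n * (n - 1)) ≤ (n ^ 2) ^ m`.
Taking logarithms, `n * (n - 1) ≤ 2 * m * log₂ n`, and `n` is negligible against `n ^ 2`.
-/

open Finset
open scoped Pointwise

section Monoid

variable {M : Type*} [Monoid M]

lemma list_prod_mem_pow_length [DecidableEq M] {S : Finset M} {L : List M} (hL : ∀ b ∈ L, b ∈ S) :
    L.prod ∈ S ^ L.length := by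
  induction L with
  | nil => simp
  | cons b L ih =>
    rw [List.forall_mem_cons] at hL
    rw [List.prod_cons, List.length_cons, pow_succ']
    exact mul_mem_mul hL.1 (ih hL.2)

lemma list_prod_mem_insert_one_pow [DecidableEq M] {S : Finset M} {L : List M} {m : ℕ}
    (hL : ∀ b ∈ L, b ∈ S) (hm : L.length ≤ m) : L.prod ∈ insert 1 S ^ m :=
  pow_subset_pow (subset_insert 1 S) (mem_insert_self 1 S) hm (list_prod_mem_pow_length hL)

lemma card_le_pow_of_forall_exists_list_prod {S T : Finset M} {m : ℕ}
    (h : ∀ a ∈ T, ∃ L : List M, (∀ b ∈ L, b ∈ S) ∧ L.prod = a ∧ L.length ≤ m) :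
    #T ≤ (#S + 1) ^ m := by
  classical
  have hT : T ⊆ insert 1 S ^ m := by
    intro a ha
    obtain ⟨L, hL, rfl, hm⟩ := h a ha
    exact list_prod_mem_insert_one_pow hL hm
  calc #T ≤ #(insert 1 S ^ m) := card_le_card hT
    _ ≤ #(insert 1 S) ^ m := card_pow_le
    _ ≤ (#S + 1) ^ m := Nat.pow_le_pow_left (card_insert_le 1 S) m

lemma exists_mem_forall_list_prod_card_le_pow_length (S : Finset M) {T : Finset M}
    (hT : T.Nonempty) :
    ∃ a ∈ T, ∀ L : List M, (∀ b ∈ L, b ∈ S) → L.prod = a → #T ≤ (#S + 1) ^ L.length := by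
  by_contra! hshort
  choose! word hmem hprod hlt using hshort
  obtain ⟨a, ha, hmax⟩ := T.exists_max_image (fun a ↦ (word a).length) hT
  have hle : #T ≤ (#S + 1) ^ (word a).length :=
    card_le_pow_of_forall_exists_list_prod fun b hb ↦ ⟨word b, hmem b hb, hprod b hb, hmax b hb⟩
  exact (hlt a ha).not_ge hle

lemma exists_isUnit_forall_list_prod_card_units_le_pow_length [Finite Mˣ] (S : Finset M) :
    ∃ a : M, IsUnit a ∧
      ∀ L : List M, (∀ b ∈ L, b ∈ S) → L.prod = a → Nat.card Mˣ ≤ (#S + 1) ^ L.length := by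
  have := Fintype.ofFinite Mˣ
  obtain ⟨_, ha, hlength⟩ := exists_mem_forall_list_prod_card_le_pow_length S
    (univ_nonempty.map (f := ⟨(Units.val : Mˣ → M), Units.val_injective⟩))
  obtain ⟨u, -, rfl⟩ := mem_map.mp ha
  rw [card_map, card_univ, ← Nat.card_eq_fintype_card] at hlength
  exact ⟨u, u.isUnit, hlength⟩

end Monoid

lemma pow_sub_one_mul_le_card_GL (F : Type*) [Field F] [Fintype F] (n : ℕ) :
    Fintype.card F ^ ((n - 1) * n) ≤ Nat.card (Matrix.GeneralLinearGroup (Fin n) F) := by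
  set q := Fintype.card F
  have hq : 2 ≤ q := Fintype.one_lt_card
  have hfactor (i : Fin n) : q ^ (n - 1) ≤ q ^ n - q ^ (i : ℕ) := by
    apply Nat.le_sub_of_add_le
    calc q ^ (n - 1) + q ^ (i : ℕ) ≤ q ^ (n - 1) + q ^ (n - 1) := by gcongr <;> omega
      _ = 2 * q ^ (n - 1) := (two_mul _).symm
      _ ≤ q * q ^ (n - 1) := by gcongr
      _ = q ^ n := mul_pow_sub_one (Fin.pos i).ne' q
  calc q ^ ((n - 1) * n) = ∏ _i : Fin n, q ^ (n - 1) := by simp [pow_mul]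
    _ ≤ ∏ i : Fin n, (q ^ n - q ^ (i : ℕ)) := prod_le_prod' fun i _ ↦ hfactor i
    _ = Nat.card (Matrix.GeneralLinearGroup (Fin n) F) := (Matrix.card_GL_field n).symm

/-- The elementary transvections with coefficient `1`, as a finite set, for counting them. -/
def unitTransvections (ι R : Type*) [Fintype ι] [DecidableEq ι] [CommRing R] [DecidableEq R] :
    Finset (Matrix ι ι R) :=
  (univ : Finset ι).offDiag.image fun p ↦ Matrix.transvection p.1 p.2 1

lemma card_unitTransvections_add_one_le (ι R : Type*) [Fintype ι] [DecidableEq ι] [Nonempty ι]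
    [CommRing R] [DecidableEq R] : #(unitTransvections ι R) + 1 ≤ Fintype.card ι ^ 2 := by
  have hoffDiag : #(unitTransvections ι R) ≤ Fintype.card ι * Fintype.card ι - Fintype.card ι :=
    card_image_le.trans_eq (offDiag_card univ)
  have hpos : 0 < Fintype.card ι := Fintype.card_pos
  have hself : Fintype.card ι ≤ Fintype.card ι * Fintype.card ι := Nat.le_mul_self _
  rw [sq]
  omega

lemma IsTransvection.mem_unitTransvections {n : ℕ} {A : Matrix (Fin n) (Fin n) (ZMod 2)}
    (hA : IsTransvection A) : A ∈ unitTransvections (Fin n) (ZMod 2) := by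
  obtain ⟨i, j, hij, rfl⟩ := hA
  exact mem_image.mpr ⟨(i, j), mem_offDiag.mpr ⟨mem_univ i, mem_univ j, hij⟩, rfl⟩

lemma exists_isUnit_forall_transvections_two_pow_le {n : ℕ} (hn : 0 < n) :
    ∃ A : Matrix (Fin n) (Fin n) (ZMod 2), IsUnit A ∧
      ∀ L : List (Matrix (Fin n) (Fin n) (ZMod 2)),
        (∀ B ∈ L, IsTransvection B) → L.prod = A → 2 ^ ((n - 1) * n) ≤ (n ^ 2) ^ L.length := by
  obtain ⟨A, hA, hlength⟩ := exists_isUnit_forall_list_prod_card_units_le_pow_length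
    (unitTransvections (Fin n) (ZMod 2))
  refine ⟨A, hA, fun L hL hLA ↦ ?_⟩
  have : Nonempty (Fin n) := ⟨⟨0, hn⟩⟩
  have hGL := pow_sub_one_mul_le_card_GL (ZMod 2) n
  have htransvections := card_unitTransvections_add_one_le (Fin n) (ZMod 2)
  rw [ZMod.card] at hGL
  rw [Fintype.card_fin] at htransvections
  calc 2 ^ ((n - 1) * n)
      ≤ Nat.card (Matrix.GeneralLinearGroup (Fin n) (ZMod 2)) := hGL
    _ ≤ (#(unitTransvections (Fin n) (ZMod 2)) + 1) ^ L.length :=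
        hlength L (fun B hB ↦ (hL B hB).mem_unitTransvections) hLA
    _ ≤ (n ^ 2) ^ L.length := Nat.pow_le_pow_left htransvections _

lemma cast_le_mul_logb_of_pow_le_pow {b n k m : ℕ} (hb : 1 < b) (h : b ^ k ≤ n ^ m) :
    (k : ℝ) ≤ m * Real.logb b n := by
  have hb' : (1 : ℝ) < b := by exact_mod_cast hb
  have hreal : (b : ℝ) ^ k ≤ (n : ℝ) ^ m := by exact_mod_cast h
  have hlog := Real.logb_le_logb_of_le hb' (by positivity) hreal
  rwa [Real.logb_pow, Real.logb_pow, Real.logb_self_eq_one hb', mul_one] at hlog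

lemma half_sub_mul_sq_le {ε x : ℝ} (hx : 0 ≤ x) (hεx : 1 ≤ 2 * ε * x) :
    (1 / 2 - ε) * x ^ 2 ≤ (x - 1) * x / 2 := by
  linarith [mul_le_mul_of_nonneg_right hεx hx]

/-- For every `ε > 0`, for all sufficiently large `n`, some invertible `n × n`
matrix over `𝔽₂` requires at least `(1/2 − ε) · n² / log₂ n` transvections. -/
theorem lower_bound_constant_half (ε : ℝ) (hε : 0 < ε) :
    ∃ N : ℕ, ∀ n : ℕ, N ≤ n →
      ∃ A : Matrix (Fin n) (Fin n) (ZMod 2), IsUnit A ∧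
        ∀ L : List (Matrix (Fin n) (Fin n) (ZMod 2)),
          (∀ B ∈ L, IsTransvection B) → L.prod = A →
            (1 / 2 - ε) * (n : ℝ) ^ 2 / Real.logb 2 n ≤ L.length := by
  refine ⟨max 2 ⌈1 / (2 * ε)⌉₊, fun n hN ↦ ?_⟩
  obtain ⟨hn, hceil⟩ := max_le_iff.mp hN
  have hlog : 0 < Real.logb 2 n := Real.logb_pos one_lt_two (by exact_mod_cast hn)
  have hεn : 1 ≤ 2 * ε * n := (div_le_iff₀' (by positivity)).mp (Nat.ceil_le.mp hceil)
  obtain ⟨A, hA, hlength⟩ := exists_isUnit_forall_transvections_two_pow_le (n := n) (by omega)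
  refine ⟨A, hA, fun L hL hLA ↦ (div_le_iff₀ hlog).mpr ?_⟩
  have hpow : 2 ^ ((n - 1) * n) ≤ n ^ (2 * L.length) := by
    simpa only [pow_mul] using hlength L hL hLA
  have hcount := cast_le_mul_logb_of_pow_le_pow one_lt_two hpow
  push_cast [Nat.cast_pred (show 0 < n by omega)] at hcount
  calc (1 / 2 - ε) * (n : ℝ) ^ 2 ≤ (n - 1) * n / 2 := half_sub_mul_sq_le n.cast_nonneg hεn
    _ ≤ L.length * Real.logb 2 n := by linarith
end

section
/- There exist constants c₁, c₂ > 0 such that for every n ≥ 2: (i) every invertible n×n matrix over 𝔽₂ can be written as a product of at most c₂ · n² / log₂ n transvections, and (ii) there exists an invertible n×n matrix over 𝔽₂ such that every list of transvections whose product equals it has length at least c₁ · n² / log₂ n. -/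
/-!
Lower bound: there are at least `2 ^ (n * (n - 1))` invertible matrices, but at most
`(2 * n ^ 2) ^ k` products of `k` gates.

Upper bound: Gaussian elimination can create each pivot by adding one lower row to the pivot row
instead of swapping rows, which factors an invertible matrix as upper unitriangular times lower
unitriangular times upper unitriangular. A unitriangular matrix is a product of `n / m` matrices
differing from `1` only in `m` columns. In these columns at most `2 ^ m` distinct rows occur, so it
suffices to build one copy of each with `m * 2 ^ m` gates and to distribute the copies with `2 * n`
gates; `m ≈ log₂ n / 2` makes a column block cost `O(n)`.
-/

open Matrix
open scoped Pointwise Finset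

theorem mem_insert_one_pow_iff_exists_list {M : Type*} [Monoid M] {S : Set M} {x : M} {k : ℕ} :
    x ∈ insert 1 S ^ k ↔ ∃ L : List M, (∀ y ∈ L, y ∈ S) ∧ L.prod = x ∧ L.length ≤ k := by
  constructor
  · induction k generalizing x with
    | zero => exact fun hx => ⟨[], by simp, by simpa using hx.symm, le_rfl⟩
    | succ k ih =>
      rw [pow_succ']
      rintro ⟨y, hy, z, hz, rfl⟩
      obtain ⟨L, hLS, rfl, hLk⟩ := ih hz
      rcases hy with rfl | hy
      · exact ⟨L, hLS, by simp, by omega⟩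
      · exact ⟨y :: L, by simpa [hy] using hLS, by simp, by simpa using hLk⟩
  · rintro ⟨L, hLS, rfl, hLk⟩
    refine Set.pow_subset_pow_right (Set.mem_insert 1 S) hLk ?_
    exact Set.mem_pow.2 ⟨fun i => ⟨L.get i, Or.inr (hLS _ (L.get_mem i))⟩, by
      simp only [List.ofFn_get]⟩

/-- The identity together with all transvections `1 + c E_ij`, `i ≠ j`. Because the identity is
included, the pointwise power `transvectionGates ι R ^ k` is the set of products of at most `k`
transvections, so membership in it expresses an upper bound on circuit length. -/
def transvectionGates (ι R : Type*) [DecidableEq ι] [CommRing R] : Set (Matrix ι ι R) :=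
  insert 1 (Set.range TransvectionStruct.toMatrix)

/-- `N i j` may be nonzero only where `b i < b j`. For `b = id` this is strict upper
triangularity, for `b = Fin.rev` strict lower triangularity; a two-valued `b` describes a matrix
supported on an off-diagonal block. -/
def IsStrictlyTriangular {ι α R : Type*} [LT α] [Zero R] (b : ι → α) (N : Matrix ι ι R) : Prop :=
  ∀ ⦃i j⦄, N i j ≠ 0 → b i < b j

/-- The matrix with the entries of `N` at the positions satisfying `p`, and `0` elsewhere. -/
def maskEntries {ι R : Type*} [Zero R] (p : ι → ι → Prop) [DecidableRel p]
    (N : Matrix ι ι R) : Matrix ι ι R :=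
  Matrix.of fun i j => if p i j then N i j else 0

section Mask

variable {ι R : Type*}

theorem maskEntries_apply [Zero R] (p : ι → ι → Prop) [DecidableRel p] (N : Matrix ι ι R)
    (i j : ι) : maskEntries p N i j = if p i j then N i j else 0 :=
  rfl

theorem maskEntries_apply_ne_zero [Zero R] {p : ι → ι → Prop} [DecidableRel p] {N : Matrix ι ι R}
    {i j : ι} : maskEntries p N i j ≠ 0 ↔ p i j ∧ N i j ≠ 0 := by
  simp [maskEntries_apply]

theorem maskEntries_add_maskEntries_not [AddZeroClass R] (p : ι → ι → Prop) [DecidableRel p]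
    (N : Matrix ι ι R) : maskEntries p N + maskEntries (fun i j => ¬ p i j) N = N := by
  ext i j
  by_cases h : p i j <;> simp [maskEntries_apply, h]

theorem IsStrictlyTriangular.mask {α : Type*} [LT α] [Zero R] {b : ι → α} {N : Matrix ι ι R}
    (hN : IsStrictlyTriangular b N) (p : ι → ι → Prop) [DecidableRel p] :
    IsStrictlyTriangular b (maskEntries p N) :=
  fun _ _ h => hN (maskEntries_apply_ne_zero.1 h).2

theorem maskEntries_eq_single [DecidableEq ι] [Zero R] (x : ι × ι) (N : Matrix ι ι R) :
    maskEntries (fun i j => (i, j) = x) N = single x.1 x.2 (N x.1 x.2) := by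
  ext i j
  by_cases hij : (i, j) = x
  · subst hij
    simp [maskEntries_apply]
  · rw [single_apply, if_neg fun h => hij (Prod.ext h.1.symm h.2.symm), maskEntries_apply,
      if_neg hij]

variable [Fintype ι]

theorem mul_eq_zero_of_forall_entry {κ μ : Type*} [NonUnitalNonAssocSemiring R]
    {M : Matrix κ ι R} {N : Matrix ι μ R} (h : ∀ i j k, M i j ≠ 0 → N j k = 0) : M * N = 0 := by
  ext i k
  refine Finset.sum_eq_zero fun j _ => ?_
  by_cases hM : M i j = 0
  · exact mul_eq_zero_of_left hM _
  · exact mul_eq_zero_of_right _ (h i j k hM)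

theorem one_add_maskEntries_mul_one_add_maskEntries_not [DecidableEq ι] [Ring R] {p : ι → ι → Prop}
    [DecidableRel p] {N : Matrix ι ι R}
    (h : ∀ i j k, p i j → N i j ≠ 0 → ¬ p j k → N j k = 0) :
    (1 + maskEntries p N) * (1 + maskEntries (fun i j => ¬ p i j) N) = 1 + N := by
  have hmul : maskEntries p N * maskEntries (fun i j => ¬ p i j) N = 0 := by
    refine mul_eq_zero_of_forall_entry fun i j k hij => ?_
    rw [maskEntries_apply_ne_zero] at hij
    simpa [maskEntries_apply] using h i j k hij.1 hij.2
  calc _ = 1 + (maskEntries p N + maskEntries (fun i j => ¬ p i j) N)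
        + maskEntries p N * maskEntries (fun i j => ¬ p i j) N := by noncomm_ring
    _ = 1 + N := by rw [hmul, maskEntries_add_maskEntries_not, add_zero]

end Mask

section GateCount

variable {ι R : Type*} [DecidableEq ι] [CommRing R]

theorem transvection_mem_transvectionGates {i j : ι} (hij : i ≠ j) (c : R) :
    transvection i j c ∈ transvectionGates ι R :=
  Or.inr ⟨⟨i, j, hij, c⟩, rfl⟩

variable [Fintype ι]

theorem transvectionGates_pow_mono {k l : ℕ} (hkl : k ≤ l) :
    transvectionGates ι R ^ k ⊆ transvectionGates ι R ^ l :=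
  Set.pow_subset_pow_right (Set.mem_insert 1 _) hkl

theorem mul_mem_transvectionGates_pow {A B : Matrix ι ι R} {k l : ℕ}
    (hA : A ∈ transvectionGates ι R ^ k) (hB : B ∈ transvectionGates ι R ^ l) :
    A * B ∈ transvectionGates ι R ^ (k + l) :=
  pow_add (transvectionGates ι R) k l ▸ Set.mul_mem_mul hA hB

-- Entries are split off in order of decreasing column, so that each new gate acts independently.
theorem IsStrictlyTriangular.one_add_mem_pow_card {α : Type*} [LinearOrder α] {b : ι → α}
    {N : Matrix ι ι R} (hN : IsStrictlyTriangular b N) {W : Finset (ι × ι)}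
    (hW : ∀ i j, N i j ≠ 0 → (i, j) ∈ W) : 1 + N ∈ transvectionGates ι R ^ #W := by
  induction W using Finset.induction_on_max_value (fun x : ι × ι => b x.2) generalizing N with
  | empty =>
    have hN0 : N = 0 := by
      ext i j
      by_contra hij
      simpa using hW i j hij
    simp [hN0]
  | insert x W hxW hmax ih =>
    let p : ι → ι → Prop := fun i j => (i, j) = x
    have hfactor : (1 + maskEntries p N) * (1 + maskEntries (fun i j => ¬ p i j) N) = 1 + N := by
      refine one_add_maskEntries_mul_one_add_maskEntries_not fun i j k hij _ hjk => ?_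
      by_contra hNjk
      have hle := hmax (j, k) (Finset.mem_of_mem_insert_of_ne (hW j k hNjk) hjk)
      have hjx : x.2 = j := by rw [← hij]
      exact (hN hNjk).not_ge (hjx ▸ hle)
    have hgate : 1 + maskEntries p N ∈ transvectionGates ι R := by
      rw [maskEntries_eq_single x N]
      by_cases hx : N x.1 x.2 = 0
      · simp [hx, transvectionGates]
      · exact transvection_mem_transvectionGates (fun h => (hN hx).ne (congrArg b h)) _
    have hrest : 1 + maskEntries (fun i j => ¬ p i j) N ∈ transvectionGates ι R ^ #W := by
      refine ih (hN.mask _) fun i j hij => ?_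
      rw [maskEntries_apply_ne_zero] at hij
      exact Finset.mem_of_mem_insert_of_ne (hW i j hij.2) hij.1
    rw [Finset.card_insert_of_notMem hxW, pow_succ', ← hfactor]
    exact Set.mul_mem_mul hgate hrest

end GateCount

section RepeatedRows

theorem exists_fiber_representative {ι β : Type*} (g : ι → β) :
    ∃ f : ι → ι, (∀ i, g (f i) = g i) ∧ ∀ i j, g i = g j → f i = f j :=
  ⟨fun i => Set.rangeSplitting g ⟨g i, i, rfl⟩, fun _ => Set.apply_rangeSplitting g _,
    fun i j hij => by simp only [hij]⟩

theorem card_fixed_rows_le {ι R : Type*} [Fintype ι] [DecidableEq ι] [Zero R] [Fintype R]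
    {f : ι → ι} {S : Finset ι} {N : Matrix ι ι R} (hf : ∀ i j, N i = N j → f i = f j)
    (hN : ∀ i j, N i j ≠ 0 → j ∈ S) :
    #{i | f i = i} ≤ Fintype.card R ^ #S := by
  classical
  have hcard : Fintype.card (S → R) = Fintype.card R ^ #S := by simp
  rw [← hcard, ← Finset.card_univ]
  refine Finset.card_le_card_of_injOn (fun i j => N i j) (fun _ _ => Finset.mem_univ _) ?_
  intro i hi i' hi' heq
  simp only [Finset.coe_filter, Finset.mem_univ, true_and, Set.mem_ofPred_eq] at hi hi'
  have hrow : N i = N i' := by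
    funext j
    by_cases hj : j ∈ S
    · exact congrFun heq ⟨j, hj⟩
    · rw [not_imp_comm.1 (hN i j) hj, not_imp_comm.1 (hN i' j) hj]
  rw [← hi, ← hi', hf i i' hrow]

/-- Left multiplication by `1 + copyRows R f S` adds row `f i` to row `i`, for every `i ∉ S` not
fixed by `f`. -/
def copyRows {ι : Type*} [DecidableEq ι] (R : Type*) [Zero R] [One R] (f : ι → ι) (S : Finset ι) :
    Matrix ι ι R :=
  Matrix.of fun i j => if f i ≠ i ∧ i ∉ S ∧ j = f i then 1 else 0

theorem copyRows_support {ι R : Type*} [DecidableEq ι] [Zero R] [One R] {f : ι → ι}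
    {S : Finset ι} {i j : ι} (h : copyRows R f S i j ≠ 0) : f i ≠ i ∧ i ∉ S ∧ j = f i := by
  by_contra hcon
  exact h (if_neg hcon)

variable {ι R : Type*} [Fintype ι] [DecidableEq ι] [CommRing R]

theorem copyRows_mul_apply (f : ι → ι) (S : Finset ι) (M : Matrix ι ι R) (i j : ι) :
    (copyRows R f S * M) i j = if f i ≠ i ∧ i ∉ S then M (f i) j else 0 := by
  by_cases h : f i ≠ i ∧ i ∉ S
  · simp [mul_apply, copyRows, h]
  · simp [mul_apply, copyRows, ← and_assoc, h]

theorem conj_copyRows_eq_one_add {f : ι → ι} {S : Finset ι} {N : Matrix ι ι R}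
    (hff : ∀ i, f (f i) = f i) (hNf : ∀ i, N (f i) = N i)
    (hN : ∀ i j, N i j ≠ 0 → i ∉ S ∧ j ∈ S) :
    (1 + copyRows R f S) * (1 + maskEntries (fun i _ => f i = i) N) * (1 - copyRows R f S) =
      1 + N := by
  set E := copyRows R f S
  set M := maskEntries (fun i _ => f i = i) N
  have hEE : E * E = 0 := by
    refine mul_eq_zero_of_forall_entry fun i j k hij => ?_
    obtain ⟨-, -, rfl⟩ := copyRows_support hij
    simp [E, copyRows, hff]
  have hME : M * E = 0 := by
    refine mul_eq_zero_of_forall_entry fun i j k hij => ?_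
    simp [E, copyRows, (hN i j (maskEntries_apply_ne_zero.1 hij).2).2]
  have hMEM : M + E * M = N := by
    ext i j
    simp only [E, M]
    rw [Matrix.add_apply, copyRows_mul_apply, maskEntries_apply, maskEntries_apply, hff, hNf]
    by_cases hiS : i ∈ S
    · have hNij : N i j = 0 := by
        by_contra h
        exact (hN i j h).1 hiS
      simp [hNij]
    · by_cases hfi : f i = i <;> simp [hfi, hiS]
  calc _ = 1 + (M + E * M) - E * E - M * E - E * (M * E) := by noncomm_ring
    _ = 1 + N := by rw [hMEM, hEE, hME]; simp

theorem one_add_copyRows_mem_pow {f : ι → ι} (hff : ∀ i, f (f i) = f i) (S : Finset ι) :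
    1 + copyRows R f S ∈ transvectionGates ι R ^ Fintype.card ι ∧
      1 - copyRows R f S ∈ transvectionGates ι R ^ Fintype.card ι := by
  have hgraph : #(Finset.univ.image fun i => (i, f i)) ≤ Fintype.card ι := Finset.card_image_le
  have htri : IsStrictlyTriangular (fun i => if f i = i then 1 else 0) (copyRows R f S) := by
    intro i j hij
    obtain ⟨hfi, -, rfl⟩ := copyRows_support hij
    simp [hfi, hff]
  have hsupp : ∀ i j, copyRows R f S i j ≠ 0 → (i, j) ∈ Finset.univ.image fun i => (i, f i) := by
    intro i j hij
    simp [(copyRows_support hij).2.2]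
  rw [sub_eq_add_neg]
  refine ⟨transvectionGates_pow_mono hgraph (htri.one_add_mem_pow_card hsupp),
    transvectionGates_pow_mono hgraph (IsStrictlyTriangular.one_add_mem_pow_card
      (b := fun i => if f i = i then 1 else 0) ?_ ?_)⟩
  · exact fun i j hij => htri (neg_ne_zero.1 hij)
  · exact fun i j hij => hsupp i j (neg_ne_zero.1 hij)

-- At most `q ^ #S` rows of `N` are distinct: build one copy of each, and distribute the copies
-- with one gate per row.
theorem one_add_mem_pow_of_column_support [Fintype R] {S : Finset ι} {N : Matrix ι ι R}
    (hN : ∀ i j, N i j ≠ 0 → i ∉ S ∧ j ∈ S) :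
    1 + N ∈ transvectionGates ι R ^ (2 * Fintype.card ι + #S * Fintype.card R ^ #S) := by
  obtain ⟨f, hNf, hf⟩ := exists_fiber_representative N
  have hff : ∀ i, f (f i) = f i := fun i => hf _ _ (hNf i)
  obtain ⟨hE, hE'⟩ := one_add_copyRows_mem_pow (R := R) hff S
  have hM : 1 + maskEntries (fun i _ => f i = i) N ∈
      transvectionGates ι R ^ #(({i | f i = i} : Finset ι) ×ˢ S) := by
    refine IsStrictlyTriangular.one_add_mem_pow_card (b := fun i => if i ∈ S then 1 else 0) ?_ ?_
    · intro i j hij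
      obtain ⟨hi, hj⟩ := hN i j (maskEntries_apply_ne_zero.1 hij).2
      simp [hi, hj]
    · intro i j hij
      rw [maskEntries_apply_ne_zero] at hij
      simp [hij.1, (hN i j hij.2).2]
  have hcard := Nat.mul_le_mul_right #S (card_fixed_rows_le hf fun i j hij => (hN i j hij).2)
  rw [← conj_copyRows_eq_one_add hff hNf hN]
  refine transvectionGates_pow_mono ?_
    (mul_mem_transvectionGates_pow (mul_mem_transvectionGates_pow hE hM) hE')
  rw [Finset.card_product]
  linarith

end RepeatedRows

section Unitriangular

variable {ι R : Type*} [Fintype ι] [DecidableEq ι] [CommRing R] [Fintype R]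

theorem IsStrictlyTriangular.one_add_mem_pow_of_columns_mem {α : Type*} [LinearOrder α] {b : ι → α}
    {N : Matrix ι ι R} (hN : IsStrictlyTriangular b N) {S : Finset ι}
    (hS : ∀ i j, N i j ≠ 0 → j ∈ S) :
    1 + N ∈ transvectionGates ι R ^
      (#S * #S + (2 * Fintype.card ι + #S * Fintype.card R ^ #S)) := by
  have hinside : 1 + maskEntries (fun i _ => i ∈ S) N ∈ transvectionGates ι R ^ (#S * #S) := by
    rw [← Finset.card_product]
    refine (hN.mask _).one_add_mem_pow_card fun i j hij => ?_
    rw [maskEntries_apply_ne_zero] at hij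
    exact Finset.mk_mem_product hij.1 (hS i j hij.2)
  have houtside : 1 + maskEntries (fun i _ => i ∉ S) N ∈
      transvectionGates ι R ^ (2 * Fintype.card ι + #S * Fintype.card R ^ #S) := by
    refine one_add_mem_pow_of_column_support fun i j hij => ?_
    rw [maskEntries_apply_ne_zero] at hij
    exact ⟨hij.1, hS i j hij.2⟩
  rw [← one_add_maskEntries_mul_one_add_maskEntries_not (p := fun i _ => i ∈ S)
    fun i j _ _ hij hj => absurd (hS i j hij) hj]
  exact mul_mem_transvectionGates_pow hinside houtside

theorem IsStrictlyTriangular.one_add_mem_pow_of_lt_mul {b : ι → ℕ} (hb : b.Injective)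
    {N : Matrix ι ι R} (hN : IsStrictlyTriangular b N) {m t : ℕ}
    (ht : ∀ i j, N i j ≠ 0 → b j < t * m) :
    1 + N ∈ transvectionGates ι R ^
      (t * (m * m + (2 * Fintype.card ι + m * Fintype.card R ^ m))) := by
  induction t generalizing N with
  | zero =>
    have hN0 : N = 0 := by
      ext i j
      by_contra hij
      simpa using ht i j hij
    simp [hN0]
  | succ t ih =>
    let S : Finset ι := {j | t * m ≤ b j ∧ b j < (t + 1) * m}
    have hSm : #S ≤ m := by
      calc #S ≤ #(Finset.Ico (t * m) ((t + 1) * m)) :=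
            Finset.card_le_card_of_injOn b (by simp [S, Set.MapsTo]) hb.injOn
        _ = m := by rw [Nat.card_Ico, add_mul, one_mul, Nat.add_sub_cancel_left]
    have hlast : 1 + maskEntries (fun _ j => t * m ≤ b j) N ∈ transvectionGates ι R ^
        (m * m + (2 * Fintype.card ι + m * Fintype.card R ^ m)) := by
      refine transvectionGates_pow_mono ?_ ((hN.mask _).one_add_mem_pow_of_columns_mem (S := S) ?_)
      · have : 0 < Fintype.card R := Fintype.card_pos
        gcongr
      · intro i j hij
        rw [maskEntries_apply_ne_zero] at hij
        simp [S, hij.1, ht i j hij.2]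
    have hinit := ih (hN.mask fun _ j => ¬ t * m ≤ b j) fun i j hij =>
      not_le.1 (maskEntries_apply_ne_zero.1 hij).1
    have hfactor : (1 + maskEntries (fun _ j => t * m ≤ b j) N) *
        (1 + maskEntries (fun _ j => ¬ t * m ≤ b j) N) = 1 + N := by
      refine one_add_maskEntries_mul_one_add_maskEntries_not fun i j k hj _ hk => ?_
      by_contra hjk
      exact hk (hj.trans (hN hjk).le)
    rw [← hfactor, add_mul, one_mul, add_comm (t * _)]
    exact mul_mem_transvectionGates_pow hlast hinit

end Unitriangular

section TriangularFactorization

/-- The block matrix `[[a, r], [c, D]]` with first row `(a, r)` and first column `(a, c)`. -/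
def bordered {K : Type*} {n : ℕ} (a : K) (r c : Fin n → K) (D : Matrix (Fin n) (Fin n) K) :
    Matrix (Fin (n + 1)) (Fin (n + 1)) K :=
  Matrix.of (Fin.cons (Fin.cons a r) fun i => Fin.cons (c i) (D i))

variable {K : Type*} {n : ℕ}

theorem exists_eq_bordered (A : Matrix (Fin (n + 1)) (Fin (n + 1)) K) :
    ∃ a r c D, A = bordered a r c D :=
  ⟨A 0 0, fun j => A 0 j.succ, fun i => A i.succ 0, A.submatrix Fin.succ Fin.succ, by
    ext i j
    cases i using Fin.cases <;> cases j using Fin.cases <;> rfl⟩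

theorem bordered_mul_bordered [CommSemiring K] (a a' : K) (r r' c c' : Fin n → K)
    (D D' : Matrix (Fin n) (Fin n) K) :
    bordered a r c D * bordered a' r' c' D' =
      bordered (a * a' + r ⬝ᵥ c') (a • r' + r ᵥ* D') (a' • c + D *ᵥ c')
        (vecMulVec c r' + D * D') := by
  ext i j
  cases i using Fin.cases <;> cases j using Fin.cases <;>
    simp [bordered, mul_apply, Fin.sum_univ_succ, dotProduct, vecMul, mulVec, vecMulVec_apply,
      mul_comm]

theorem one_add_bordered [NonAssocSemiring K] (r c : Fin n → K) (D : Matrix (Fin n) (Fin n) K) :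
    1 + bordered 0 r c D = bordered 1 r c (1 + D) := by
  ext i j
  cases i using Fin.cases <;> cases j using Fin.cases <;>
    simp [bordered, one_apply, Fin.succ_ne_zero, (Fin.succ_ne_zero _).symm]

theorem isStrictlyTriangular_id_bordered [Zero K] {V : Matrix (Fin n) (Fin n) K}
    (hV : IsStrictlyTriangular id V) (r : Fin n → K) :
    IsStrictlyTriangular id (bordered 0 r 0 V) := by
  intro i j
  cases i using Fin.cases <;> cases j using Fin.cases
  case succ.succ i j => exact fun h => Fin.succ_lt_succ_iff.2 (hV h)
  all_goals simp [bordered]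

theorem isStrictlyTriangular_rev_bordered [Zero K] {L : Matrix (Fin n) (Fin n) K}
    (hL : IsStrictlyTriangular Fin.rev L) (c : Fin n → K) :
    IsStrictlyTriangular Fin.rev (bordered 0 0 c L) := by
  intro i j
  cases i using Fin.cases <;> cases j using Fin.cases
  case succ.succ i j =>
    exact fun h => Fin.rev_lt_rev.2 (Fin.succ_lt_succ_iff.2 (Fin.rev_lt_rev.1 (hL h)))
  case succ.zero i => exact fun _ => Fin.rev_lt_rev.2 i.succ_pos
  all_goals simp [bordered]

theorem isUpperTriangular_bordered [Zero K] {U : Matrix (Fin n) (Fin n) K}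
    (hU : U.IsUpperTriangular) (a : K) (r : Fin n → K) :
    (bordered a r 0 U).IsUpperTriangular := by
  intro i j
  cases i using Fin.cases <;> cases j using Fin.cases
  case succ.succ i j => exact fun h => hU (Fin.succ_lt_succ_iff.1 h)
  all_goals simp [bordered]

theorem IsStrictlyTriangular.isUnit_one_add {ι R : Type*} [Fintype ι] [LinearOrder ι]
    [CommRing R] {V : Matrix ι ι R} (hV : IsStrictlyTriangular id V) : IsUnit (1 + V) := by
  have hzero : ∀ i j, j ≤ i → V i j = 0 := fun i j hji =>
    not_imp_comm.1 (@hV i j) (not_lt.2 hji)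
  have htri : (1 + V).IsUpperTriangular := fun i j (hji : j < i) => by
    rw [Matrix.add_apply, one_apply_ne hji.ne', hzero i j hji.le, add_zero]
  rw [isUnit_iff_isUnit_det, det_of_isUpperTriangular htri]
  simp [hzero]

-- If `c i ≠ 0`, adding `(1 - a) / c i` times that entry to `a` turns the pivot into `1`.
theorem exists_pivot {ι : Type*} [Fintype ι] [Field K] (a : K) (c : ι → K) :
    ∃ v x : ι → K, c = (a + v ⬝ᵥ c) • x := by
  classical
  by_cases hc : c = 0
  · exact ⟨0, 0, by simp [hc]⟩
  · obtain ⟨i, hi⟩ := Function.ne_iff.1 hc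
    refine ⟨Pi.single i ((1 - a) / c i), c, ?_⟩
    rw [single_dotProduct, div_mul_cancel₀ _ hi, add_sub_cancel, one_smul]

theorem exists_upper_mul_lower_mul_upper [Field K] (A : Matrix (Fin n) (Fin n) K) :
    ∃ V L U : Matrix (Fin n) (Fin n) K, IsStrictlyTriangular id V ∧
      IsStrictlyTriangular Fin.rev L ∧ U.IsUpperTriangular ∧ A = (1 + V) * (1 + L) * U := by
  induction n with
  | zero => exact ⟨0, 0, 0, nofun, nofun, nofun, Subsingleton.elim _ _⟩
  | succ n ih =>
    obtain ⟨a, r, c, D, rfl⟩ := exists_eq_bordered A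
    obtain ⟨v, x, hx⟩ := exists_pivot a c
    obtain ⟨V, L, U, hV, hL, hU, hschur⟩ := ih (D - vecMulVec x (r + v ᵥ* D))
    obtain ⟨y, rfl⟩ : ∃ y, (1 + V) *ᵥ y = x :=
      mulVec_surjective_iff_isUnit.2 hV.isUnit_one_add x
    refine ⟨bordered 0 (-(v ᵥ* (1 + V))) 0 V, bordered 0 0 y L,
      bordered (a + v ⬝ᵥ c) (r + v ᵥ* D) 0 U, isStrictlyTriangular_id_bordered hV _,
      isStrictlyTriangular_rev_bordered hL _, isUpperTriangular_bordered hU _ _, ?_⟩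
    have hsplit : 1 + bordered 0 (-(v ᵥ* (1 + V))) 0 V =
        bordered 1 (-v) 0 1 * bordered 1 0 0 (1 + V) := by
      simp [one_add_bordered, bordered_mul_bordered, neg_vecMul]
    have hpivoted : bordered 1 0 0 (1 + V) * bordered 1 0 y (1 + L) *
        bordered (a + v ⬝ᵥ c) (r + v ᵥ* D) 0 U = bordered (a + v ⬝ᵥ c) (r + v ᵥ* D) c D := by
      simp [bordered_mul_bordered, ← hx, ← hschur]
    rw [hsplit, one_add_bordered, mul_assoc, mul_assoc, ← mul_assoc (bordered 1 0 0 (1 + V)),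
      hpivoted]
    simp [bordered_mul_bordered, neg_vecMul]

end TriangularFactorization

section UpperBound

theorem zmod_two_eq_one_of_ne_zero {x : ZMod 2} (hx : x ≠ 0) : x = 1 := by
  revert x
  decide

theorem isStrictlyTriangular_sub_one_of_isUnit {ι : Type*} [Fintype ι] [LinearOrder ι]
    {U : Matrix ι ι (ZMod 2)} (hU : U.IsUpperTriangular) (hunit : IsUnit U) :
    IsStrictlyTriangular id (U - 1) := by
  have hdiag : ∀ i, U i i = 1 := fun i => by
    rw [isUnit_iff_isUnit_det, det_of_isUpperTriangular hU, isUnit_iff_ne_zero,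
      Finset.prod_ne_zero_iff] at hunit
    exact zmod_two_eq_one_of_ne_zero (hunit i (Finset.mem_univ i))
  intro i j hij
  by_contra hlt
  rcases (show j ≤ i from not_lt.1 hlt).eq_or_lt with rfl | hji
  · simp [hdiag] at hij
  · exact hij (by rw [Matrix.sub_apply, hU hji, one_apply_ne hji.ne', sub_zero])

theorem mem_transvectionGates_pow_of_isUnit {n m t : ℕ} (hnt : n ≤ t * m)
    {A : Matrix (Fin n) (Fin n) (ZMod 2)} (hA : IsUnit A) :
    A ∈ transvectionGates (Fin n) (ZMod 2) ^ (3 * (t * (m * m + (2 * n + m * 2 ^ m)))) := by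
  obtain ⟨V, L, U, hV, hL, hU, rfl⟩ := exists_upper_mul_lower_mul_upper A
  have hU' := isStrictlyTriangular_sub_one_of_isUnit hU (isUnit_of_mul_isUnit_right hA)
  have hcost : ∀ (b : Fin n → Fin n) (N : Matrix (Fin n) (Fin n) (ZMod 2)), b.Injective →
      IsStrictlyTriangular b N → 1 + N ∈
        transvectionGates (Fin n) (ZMod 2) ^ (t * (m * m + (2 * n + m * 2 ^ m))) := by
    intro b N hb hN
    simpa using IsStrictlyTriangular.one_add_mem_pow_of_lt_mul (b := fun i => (b i : ℕ))
      (Fin.val_injective.comp hb) hN fun _ j _ => (b j).isLt.trans_le hnt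
  have hmem := mul_mem_transvectionGates_pow (mul_mem_transvectionGates_pow
    (hcost id V Function.injective_id hV) (hcost Fin.rev L Fin.rev_injective hL))
    (hcost id (U - 1) Function.injective_id hU')
  rw [add_sub_cancel] at hmem
  exact transvectionGates_pow_mono (by omega) hmem

-- The width `m ≈ log₂ n / 2` gives `2 ^ m ≈ √n`, which keeps the cost `m * 2 ^ m` of the distinct
-- rows linear in `n`.
theorem exists_block_width {n : ℕ} (hn : 2 ≤ n) :
    ∃ m t : ℕ, n ≤ t * m ∧ t * m ≤ 2 * n ∧ m * m + (2 * n + m * 2 ^ m) ≤ 10 * n ∧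
      Real.logb 2 n ≤ 2 * m := by
  have hpow_log : 2 ^ Nat.log 2 n ≤ n := Nat.pow_log_le_self 2 (by omega)
  have hlog_lt : Nat.log 2 n < n := Nat.log_lt_self 2 (by omega)
  obtain ⟨m, hm⟩ : ∃ m, m = Nat.log 2 n / 2 + 1 := ⟨_, rfl⟩
  have hm_lt : m < 2 ^ m := Nat.lt_two_pow_self
  have hsq : 2 ^ m * 2 ^ m ≤ 4 * n := by
    calc 2 ^ m * 2 ^ m ≤ 2 ^ (Nat.log 2 n + 2) := by
          rw [← pow_add]
          exact Nat.pow_le_pow_right two_pos (by omega)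
      _ ≤ 4 * n := by rw [pow_add]; omega
  refine ⟨m, n / m + 1, ?_, ?_, by nlinarith, ?_⟩
  · exact (Nat.lt_mul_of_div_lt (Nat.lt_succ_self _) (by omega)).le
  · have := Nat.div_mul_le_self n m
    rw [add_mul]
    omega
  · calc Real.logb 2 n ≤ Real.logb 2 (2 ^ (2 * m) : ℝ) := by
          refine Real.logb_le_logb_of_le one_lt_two (by positivity) ?_
          exact_mod_cast (Nat.lt_pow_succ_log_self one_lt_two n).le.trans
            (Nat.pow_le_pow_right two_pos (by omega))
      _ = 2 * m := by simp [Real.logb_pow]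

theorem exists_mem_transvectionGates_pow_le {n : ℕ} (hn : 2 ≤ n)
    {A : Matrix (Fin n) (Fin n) (ZMod 2)} (hA : IsUnit A) :
    ∃ k : ℕ, A ∈ transvectionGates (Fin n) (ZMod 2) ^ k ∧
      (k : ℝ) ≤ 120 * (n : ℝ) ^ 2 / Real.logb 2 n := by
  obtain ⟨m, t, hnt, htm, hW, hlog⟩ := exists_block_width hn
  refine ⟨_, mem_transvectionGates_pow_of_isUnit hnt hA, ?_⟩
  generalize m * m + (2 * n + m * 2 ^ m) = W at hW ⊢
  have htm' : (t * m : ℝ) ≤ 2 * n := by exact_mod_cast htm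
  have hW' : (W : ℝ) ≤ 10 * n := by exact_mod_cast hW
  have hlog_pos : 0 < Real.logb 2 n := Real.logb_pos one_lt_two (by exact_mod_cast hn)
  rw [le_div_iff₀ hlog_pos]
  push_cast
  calc (3 * (t * W) : ℝ) * Real.logb 2 n ≤ 3 * (t * (10 * n)) * (2 * m) := by gcongr
    _ = 60 * n * (t * m) := by ring
    _ ≤ 60 * n * (2 * n) := by gcongr
    _ = 120 * (n : ℝ) ^ 2 := by ring

end UpperBound

section LowerBound

theorem ncard_transvectionGates_pow_le (ι R : Type*) [Fintype ι] [DecidableEq ι] [Nonempty ι]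
    [CommRing R] [Fintype R] (k : ℕ) :
    (transvectionGates ι R ^ k).ncard ≤ (Fintype.card ι ^ 2 * Fintype.card R) ^ k := by
  classical
  let T : Finset (Matrix ι ι R) :=
    Finset.univ.image fun x : (ι × ι) × R => transvection x.1.1 x.1.2 x.2
  have hsub : transvectionGates ι R ⊆ T := by
    rintro _ (rfl | ⟨τ, rfl⟩)
    · obtain ⟨i⟩ := ‹Nonempty ι›
      simpa [T] using ⟨i, i, 0, transvection_zero i i⟩
    · simpa [T] using ⟨τ.i, τ.j, τ.c, rfl⟩
  have hT : #T ≤ Fintype.card ι ^ 2 * Fintype.card R :=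
    Finset.card_image_le.trans (by simp [sq])
  calc (transvectionGates ι R ^ k).ncard ≤ ((T ^ k : Finset _) : Set (Matrix ι ι R)).ncard :=
        Set.ncard_le_ncard (by simpa using Set.pow_subset_pow_left hsub) (Finset.finite_toSet _)
    _ = #(T ^ k) := Set.ncard_coe_finset _
    _ ≤ #T ^ k := Finset.card_pow_le
    _ ≤ _ := Nat.pow_le_pow_left hT k

theorem pow_le_card_GL (F : Type*) [Field F] [Fintype F] (n : ℕ) :
    Fintype.card F ^ (n * (n - 1)) ≤ Nat.card (GL (Fin n) F) := by
  rw [card_GL_field]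
  have hq : 2 ≤ Fintype.card F := Fintype.one_lt_card
  calc Fintype.card F ^ (n * (n - 1)) = ∏ _i : Fin n, Fintype.card F ^ (n - 1) := by
        simp [← pow_mul, mul_comm]
    _ ≤ _ := Finset.prod_le_prod' fun i _ => ?_
  have hi : Fintype.card F ^ (i : ℕ) ≤ Fintype.card F ^ (n - 1) :=
    Nat.pow_le_pow_right (by omega) (by omega)
  have hn : 2 * Fintype.card F ^ (n - 1) ≤ Fintype.card F ^ n := by
    calc 2 * Fintype.card F ^ (n - 1) ≤ Fintype.card F * Fintype.card F ^ (n - 1) := by gcongr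
      _ = Fintype.card F ^ n := by rw [← pow_succ', Nat.sub_add_cancel i.pos]
  omega

theorem card_pow_le_of_isUnit_subset {n k : ℕ} [NeZero n] {F : Type*} [Field F] [Fintype F]
    (h : {A : Matrix (Fin n) (Fin n) F | IsUnit A} ⊆ transvectionGates (Fin n) F ^ k) :
    Fintype.card F ^ (n * (n - 1)) ≤ (n ^ 2 * Fintype.card F) ^ k := by
  have hrange : Set.range ((↑) : GL (Fin n) F → Matrix (Fin n) (Fin n) F) ⊆
      transvectionGates (Fin n) F ^ k := by
    rintro _ ⟨g, rfl⟩
    exact h g.isUnit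
  calc Fintype.card F ^ (n * (n - 1)) ≤ Nat.card (GL (Fin n) F) := pow_le_card_GL F n
    _ = (Set.range ((↑) : GL (Fin n) F → Matrix (Fin n) (Fin n) F)).ncard := by
      rw [← Set.image_univ, Set.ncard_image_of_injective _ Units.val_injective, Set.ncard_univ]
    _ ≤ (transvectionGates (Fin n) F ^ k).ncard := Set.ncard_le_ncard hrange (Set.toFinite _)
    _ ≤ _ := by simpa using ncard_transvectionGates_pow_le (Fin n) F k

theorem exists_isUnit_notMem_transvectionGates_pow {n k : ℕ} (hn : 2 ≤ n)
    (hk : (k : ℝ) ≤ 1 / 8 * (n : ℝ) ^ 2 / Real.logb 2 n) :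
    ∃ A : Matrix (Fin n) (Fin n) (ZMod 2), IsUnit A ∧
      A ∉ transvectionGates (Fin n) (ZMod 2) ^ k := by
  have : NeZero n := ⟨by omega⟩
  by_contra! hall
  have hcount : 2 ^ (n * (n - 1)) ≤ n ^ (3 * k) := by
    calc 2 ^ (n * (n - 1)) ≤ (n ^ 2 * 2) ^ k := by
          simpa using card_pow_le_of_isUnit_subset hall
      _ ≤ (n ^ 2 * n) ^ k := by gcongr
      _ = n ^ (3 * k) := by rw [← pow_succ, ← pow_mul]
  have hlog : (n * (n - 1) : ℝ) ≤ 3 * k * Real.logb 2 n := by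
    have hle : ((2 : ℝ) ^ (n * (n - 1))) ≤ (n : ℝ) ^ (3 * k) := by exact_mod_cast hcount
    have := Real.logb_le_logb_of_le one_lt_two (by positivity) hle
    simpa [Real.logb_pow, Nat.cast_sub (show 1 ≤ n by omega)] using this
  rw [le_div_iff₀ (Real.logb_pos one_lt_two (by exact_mod_cast hn))] at hk
  have hn' : (2 : ℝ) ≤ n := by exact_mod_cast hn
  nlinarith

end LowerBound

theorem transvectionGates_zmod_two (n : ℕ) :
    transvectionGates (Fin n) (ZMod 2) = insert 1 {B | IsTransvection B} := by
  refine Set.Subset.antisymm ?_ (Set.insert_subset_insert ?_)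
  · rintro _ (rfl | ⟨⟨i, j, hij, c⟩, rfl⟩)
    · exact Set.mem_insert _ _
    · by_cases hc : c = 0
      · simp [TransvectionStruct.toMatrix, hc]
      · exact Or.inr ⟨i, j, hij, by rw [zmod_two_eq_one_of_ne_zero hc]; rfl⟩
  · rintro _ ⟨i, j, hij, rfl⟩
    exact ⟨⟨i, j, hij, 1⟩, rfl⟩

theorem mem_transvectionGates_pow_iff_exists_list {n k : ℕ}
    {A : Matrix (Fin n) (Fin n) (ZMod 2)} :
    A ∈ transvectionGates (Fin n) (ZMod 2) ^ k ↔ ∃ L : List (Matrix (Fin n) (Fin n) (ZMod 2)),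
      (∀ B ∈ L, IsTransvection B) ∧ L.prod = A ∧ L.length ≤ k := by
  rw [transvectionGates_zmod_two, mem_insert_one_pow_iff_exists_list]
  rfl

/-- Theorem 1: the worst-case length of an `n`-wire C-NOT circuit is
`Θ(n²/log n)` gates. -/
theorem worst_case_cnot_length_theta :
    ∃ c₁ c₂ : ℝ, 0 < c₁ ∧ 0 < c₂ ∧ ∀ n : ℕ, 2 ≤ n →
      ((∀ A : Matrix (Fin n) (Fin n) (ZMod 2), IsUnit A →
        ∃ L : List (Matrix (Fin n) (Fin n) (ZMod 2)),
          (∀ B ∈ L, IsTransvection B) ∧ L.prod = A ∧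
          (L.length : ℝ) ≤ c₂ * (n : ℝ) ^ 2 / Real.logb 2 n) ∧
      (∃ A : Matrix (Fin n) (Fin n) (ZMod 2), IsUnit A ∧
        ∀ L : List (Matrix (Fin n) (Fin n) (ZMod 2)),
          (∀ B ∈ L, IsTransvection B) → L.prod = A →
            c₁ * (n : ℝ) ^ 2 / Real.logb 2 n ≤ L.length)) := by
  refine ⟨1 / 8, 120, by norm_num, by norm_num, fun n hn => ⟨fun A hA => ?_, ?_⟩⟩
  · obtain ⟨k, hAk, hk⟩ := exists_mem_transvectionGates_pow_le hn hA
    obtain ⟨L, hL, hprod, hlen⟩ := mem_transvectionGates_pow_iff_exists_list.1 hAk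
    exact ⟨L, hL, hprod, (Nat.cast_le.2 hlen).trans hk⟩
  · have hlog : 0 < Real.logb 2 n := Real.logb_pos one_lt_two (by exact_mod_cast hn)
    obtain ⟨A, hA, hAk⟩ := exists_isUnit_notMem_transvectionGates_pow hn
      (Nat.floor_le (a := 1 / 8 * (n : ℝ) ^ 2 / Real.logb 2 n) (by positivity))
    refine ⟨A, hA, fun L hL hprod => ?_⟩
    by_contra! hlt
    exact hAk (mem_transvectionGates_pow_iff_exists_list.2 ⟨L, hL, hprod, Nat.le_floor hlt.le⟩)
end
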